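/- Let g be a polynomial in two variables x, y with real coefficients, and let a < b, c < d be real numbers. Assume: (i) for every x₀ ∈ [a,b], the univariate polynomial y ↦ g(x₀,y) is not identically zero; (ii) g(x,c) ≠ 0 and g(x,d) ≠ 0 for all x ∈ [a,b]; (iii) there is no point (x,y) ∈ [a,b] × (c,d) with g(x,y) = 0 and ∂g/∂y(x,y) = 0. Then the number of real roots of g(a,·) in the interval (c,d), the number of real roots of g(b,·) in the interval (c,d), and the number of connected components of the set {(x,y) ∈ (a,b) × (c,d) : g(x,y) = 0} are all equal (and all these roots are simple). -/

import Mathlib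

open MvPolynomial

/-!
Near a simple zero, `F x` is injective in `y`, and its sign change persists for nearby `x`; so the
projection of the curve to the base is a local homeomorphism. Over a compact base, the nonvanishing
of `F` on the horizontal edges keeps the curve compact, which makes the projection a covering map.
A covering of a simply connected base has a continuous section through each of its points, and
these sections are the branches: every component of the curve is the graph of one of them, and each
of them contributes exactly one root to every fibre.
-/

open Set Filter Topology

section Topology

variable {E B : Type*} [TopologicalSpace E] [TopologicalSpace B] {p : E → B}

theorem isLocalHomeomorph_of_isOpenMap_of_isLocallyInjective (hp : Continuous p)
    (hopen : IsOpenMap p) (hinj : IsLocallyInjective p) : IsLocalHomeomorph p := by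
  rw [isLocalHomeomorph_iff_isOpenEmbedding_restrict]
  intro e
  obtain ⟨U, hU, heU, hinjU⟩ := hinj e
  exact ⟨U, hU.mem_nhds heU, .of_continuous_injective_isOpenMap
    (hp.comp continuous_subtype_val) hinjU.injective (hopen.domRestrict hU)⟩

theorem finite_fiber_of_isLocallyInjective [CompactSpace E] [T1Space B] (hp : Continuous p)
    (hinj : IsLocallyInjective p) (x : B) : (p ⁻¹' {x}).Finite := by
  have hconst : p ∘ ((↑) : p ⁻¹' {x} → E) = fun _ => x := funext fun e => e.2
  have hdiscrete : DiscreteTopology (p ⁻¹' {x}) := (discreteTopology_iff_locallyInjective x).2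
    (hconst ▸ hinj.comp_right continuous_subtype_val Subtype.val_injective)
  exact (isClosed_singleton.preimage hp).isCompact.finite ⟨hdiscrete⟩

theorem exists_section_of_isCoveringMap [SimplyConnectedSpace B] [LocallyPathConnectedSpace B]
    (hp : IsCoveringMap p) (e : E) :
    ∃ σ : B → E, Continuous σ ∧ (∀ x, p (σ x) = x) ∧ σ (p e) = e := by
  obtain ⟨σ, ⟨hσe, hpσ⟩, -⟩ := hp.existsUnique_continuousMap_lifts (.id B) (p e) e rfl
  exact ⟨σ, σ.continuous, congrFun hpσ, hσe⟩

theorem bijective_fiber_connectedComponents [PreconnectedSpace B] (hp : Continuous p)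
    (hsep : IsSeparatedMap p) (hinj : IsLocallyInjective p)
    (hsec : ∀ e, ∃ σ : B → E, Continuous σ ∧ (∀ x, p (σ x) = x) ∧ σ (p e) = e) (x : B) :
    Function.Bijective fun e : p ⁻¹' {x} => (e : ConnectedComponents E) := by
  constructor
  · rintro ⟨e₁, rfl⟩ ⟨e₂, he₂⟩ h
    obtain ⟨σ, hσ, hpσ, hσe⟩ := hsec e₁
    have hlift : p ∘ σ ∘ p = p ∘ id := funext fun e => hpσ (p e)
    have hclopen : IsClopen {e | (σ ∘ p) e = id e} :=
      ⟨hsep.isClosed_eqLocus (hσ.comp hp) continuous_id hlift,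
        hinj.isOpen_eqLocus (hσ.comp hp) continuous_id hlift⟩
    have hmem : e₂ ∈ connectedComponent e₁ := ConnectedComponents.coe_eq_coe'.1 h.symm
    have hσe₂ : σ (p e₂) = e₂ := hclopen.connectedComponent_subset hσe hmem
    rw [he₂, hσe] at hσe₂
    exact Subtype.ext hσe₂
  · intro C
    obtain ⟨e, rfl⟩ := ConnectedComponents.surjective_coe C
    obtain ⟨σ, hσ, hpσ, hσe⟩ := hsec e
    refine ⟨⟨σ x, hpσ x⟩, ConnectedComponents.coe_eq_coe'.2 ?_⟩
    exact (isPreconnected_range hσ).subset_connectedComponent ⟨p e, hσe⟩ ⟨x, rfl⟩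

end Topology

theorem simplyConnectedSpace_of_convex {E : Type*} [AddCommGroup E] [Module ℝ E]
    [TopologicalSpace E] [ContinuousAdd E] [ContinuousSMul ℝ E] {s : Set E} (hs : Convex ℝ s)
    (hne : s.Nonempty) : SimplyConnectedSpace s :=
  have := hs.contractibleSpace hne
  inferInstance

section SimpleZeros

theorem injOn_of_hasDerivAt_ne_zero {f f' : ℝ → ℝ} {s : Set ℝ} (hs : s.OrdConnected)
    (hderiv : ∀ y ∈ s, HasDerivAt f (f' y) y) (hne : ∀ y ∈ s, f' y ≠ 0) : InjOn f s := by
  intro y₁ h₁ y₂ h₂ heq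
  by_contra hne₁₂
  wlog hlt : y₁ < y₂ generalizing y₁ y₂
  · exact this h₂ h₁ heq.symm (Ne.symm hne₁₂) (lt_of_le_of_ne (not_lt.1 hlt) (Ne.symm hne₁₂))
  have hsub : Icc y₁ y₂ ⊆ s := hs.out h₁ h₂
  obtain ⟨t, ht, ht₀⟩ := exists_hasDerivAt_eq_zero hlt
    (fun t ht => (hderiv t (hsub ht)).continuousAt.continuousWithinAt) heq
    (fun t ht => hderiv t (hsub (Ioo_subset_Icc_self ht)))
  exact hne t (hsub (Ioo_subset_Icc_self ht)) ht₀

theorem frequently_gt_of_hasDerivAt_ne_zero {f : ℝ → ℝ} {m y₀ : ℝ} (hf : HasDerivAt f m y₀)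
    (hm : m ≠ 0) : ∃ᶠ y in 𝓝 y₀, f y₀ < f y := fun h =>
  hm (IsLocalMax.hasDerivAt_eq_zero (h.mono fun _ => not_lt.1) hf)

theorem frequently_lt_of_hasDerivAt_ne_zero {f : ℝ → ℝ} {m y₀ : ℝ} (hf : HasDerivAt f m y₀)
    (hm : m ≠ 0) : ∃ᶠ y in 𝓝 y₀, f y < f y₀ := fun h =>
  hm (IsLocalMin.hasDerivAt_eq_zero (h.mono fun _ => not_lt.1) hf)

variable {B : Type*} {l : Filter B} {F F' : B → ℝ → ℝ} {y₀ : ℝ}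

theorem exists_mem_nhds_eventually_injOn
    (hderiv : ∀ᶠ p in l ×ˢ 𝓝 y₀, HasDerivAt (F p.1) (F' p.1 p.2) p.2)
    (hne : ∀ᶠ p in l ×ˢ 𝓝 y₀, F' p.1 p.2 ≠ 0) :
    ∃ V ∈ 𝓝 y₀, ∀ᶠ x in l, InjOn (F x) V := by
  obtain ⟨U, hU, V, hV, hUV⟩ := mem_prod_iff.1 (hderiv.and hne)
  obtain ⟨ε, hε, hεV⟩ := Metric.mem_nhds_iff.1 hV
  refine ⟨Metric.ball y₀ ε, Metric.ball_mem_nhds y₀ hε, mem_of_superset hU fun x hx => ?_⟩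
  exact injOn_of_hasDerivAt_ne_zero (convex_ball y₀ ε).ordConnected
    (fun y hy => (hUV (mk_mem_prod hx (hεV hy))).1) (fun y hy => (hUV (mk_mem_prod hx (hεV hy))).2)

theorem eventually_exists_mem_eq_zero {f : ℝ → ℝ} {m : ℝ} (hf : HasDerivAt f m y₀) (hm : m ≠ 0)
    (hf₀ : f y₀ = 0) (hlim : ∀ᶠ y in 𝓝 y₀, Tendsto (fun x => F x y) l (𝓝 (f y)))
    (hcont : ∀ᶠ p in l ×ˢ 𝓝 y₀, ContinuousAt (F p.1) p.2) {V : Set ℝ} (hV : V ∈ 𝓝 y₀) :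
    ∀ᶠ x in l, ∃ y ∈ V, F x y = 0 := by
  obtain ⟨U, hU, W, hW, hUW⟩ := mem_prod_iff.1 hcont
  obtain ⟨ε, hε, hball⟩ := Metric.mem_nhds_iff.1 (inter_mem hV hW)
  have hnear : ∀ᶠ y in 𝓝 y₀, y ∈ Metric.ball y₀ ε ∧ Tendsto (fun x => F x y) l (𝓝 (f y)) :=
    (eventually_mem_set.2 (Metric.ball_mem_nhds y₀ hε)).and hlim
  obtain ⟨y₁, hfy₁, hy₁, hlim₁⟩ := ((frequently_lt_of_hasDerivAt_ne_zero hf hm).and_eventually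
    hnear).exists
  obtain ⟨y₂, hfy₂, hy₂, hlim₂⟩ := ((frequently_gt_of_hasDerivAt_ne_zero hf hm).and_eventually
    hnear).exists
  rw [hf₀] at hfy₁ hfy₂
  filter_upwards [hU, hlim₁.eventually_lt_const hfy₁, hlim₂.eventually_const_lt hfy₂]
    with x hx hneg hpos
  have hcontx : ContinuousOn (F x) (Metric.ball y₀ ε) := fun y hy =>
    (hUW (mk_mem_prod hx (hball hy).2) : ContinuousAt (F x) y).continuousWithinAt
  obtain ⟨y, hy, hy₀⟩ := (convex_ball y₀ ε).isPreconnected.intermediate_value hy₁ hy₂ hcontx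
    ⟨hneg.le, hpos.le⟩
  exact ⟨y, (hball hy).1, hy₀⟩

end SimpleZeros

theorem hasDerivAt_eval_update {𝕜 σ : Type*} [NontriviallyNormedField 𝕜] [DecidableEq σ]
    (p : MvPolynomial σ 𝕜) (v : σ → 𝕜) (i : σ) :
    HasDerivAt (fun t => eval (Function.update v i t) p) (eval v (pderiv i p)) (v i) := by
  induction p using MvPolynomial.induction_on with
  | C r => simpa using hasDerivAt_const (v i) r
  | add p q hp hq => simpa [Pi.add_def] using hp.add hq
  | mul_X p j hp =>
    have hX : HasDerivAt (fun t => eval (Function.update v i t) (X j))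
        (eval v (pderiv i (X j))) (v i) := by
      simpa [pderiv_X, Pi.single_apply, eq_comm] using
        hasDerivAt_pi.1 (hasDerivAt_update v i (v i)) j
    simpa [Pi.mul_def, Derivation.leibniz, mul_comm, add_comm] using hp.mul hX

theorem hasDerivAt_eval_pderiv_one {𝕜 : Type*} [NontriviallyNormedField 𝕜]
    (p : MvPolynomial (Fin 2) 𝕜) (x y : 𝕜) :
    HasDerivAt (fun t => eval ![x, t] p) (eval ![x, y] (pderiv 1 p)) y := by
  have hupdate (t : 𝕜) : Function.update ![x, y] 1 t = ![x, t] := by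
    ext i
    fin_cases i <;> rfl
  simpa [hupdate] using hasDerivAt_eval_update p ![x, y] 1

/-- The part of the curve `F = 0` in the strip `S × (c, d)`. The function is curried, and the
base `S` is a subset of an arbitrary type instead of an interval of the `x`-axis. -/
def curveOver {B : Type*} (F : B → ℝ → ℝ) (c d : ℝ) (S : Set B) : Set (B × ℝ) :=
  {p | p.1 ∈ S ∧ p.2 ∈ Ioo c d ∧ F p.1 p.2 = 0}

/-- The box over `K` with edges `c` and `d` is segregating for the curve `F = 0` and contains no
`x`-critical point. The separate function `F'` stands for the partial derivative of `F` in the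
fibre direction. -/
structure IsRegularSegregating {B : Type*} [TopologicalSpace B] (F F' : B → ℝ → ℝ) (c d : ℝ)
    (K : Set B) : Prop where
  continuousOn : ContinuousOn (Function.uncurry F) (K ×ˢ Icc c d)
  continuousOn_deriv : ContinuousOn (Function.uncurry F') (K ×ˢ Ioo c d)
  hasDerivAt : ∀ x ∈ K, ∀ y ∈ Ioo c d, HasDerivAt (F x) (F' x y) y
  ne_zero_edges : ∀ x ∈ K, F x c ≠ 0 ∧ F x d ≠ 0
  deriv_ne_zero : ∀ x ∈ K, ∀ y ∈ Ioo c d, F x y = 0 → F' x y ≠ 0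

namespace curveOver

section Projection

variable {B : Type*} {F : B → ℝ → ℝ} {c d : ℝ} {S : Set B}

/-- The projection of the curve to its base, with values in the subtype `S` so that it can be a
covering map. -/
def proj (e : curveOver F c d S) : S := ⟨e.1.1, e.2.1⟩

theorem continuous_proj [TopologicalSpace B] : Continuous (proj : curveOver F c d S → S) := by
  unfold proj
  fun_prop

/-- The fibre of the projection over `x`, identified with the set of roots of `F x`. -/
def fiberEquiv (x : S) :
    (proj : curveOver F c d S → S) ⁻¹' {x} ≃ {y ∈ Ioo c d | F x y = 0} where
  toFun e := ⟨e.1.1.2, e.1.2.2.1, by obtain ⟨e, rfl⟩ := e; exact e.2.2.2⟩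
  invFun y := ⟨⟨(x, y), x.2, y.2⟩, rfl⟩
  left_inv := by rintro ⟨e, rfl⟩; rfl
  right_inv _ := rfl

end Projection

variable {B : Type*} [TopologicalSpace B] {F F' : B → ℝ → ℝ} {c d : ℝ} {K S : Set B}

theorem eventually_hasDerivAt (hderiv : ∀ x ∈ S, ∀ y ∈ Ioo c d, HasDerivAt (F x) (F' x y) y)
    (x₀ : B) {y₀ : ℝ} (hy₀ : y₀ ∈ Ioo c d) :
    ∀ᶠ p in 𝓝[S] x₀ ×ˢ 𝓝 y₀, HasDerivAt (F p.1) (F' p.1 p.2) p.2 :=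
  mem_of_superset (prod_mem_prod self_mem_nhdsWithin (isOpen_Ioo.mem_nhds hy₀))
    fun p hp => hderiv p.1 hp.1 p.2 hp.2

theorem eventually_deriv_ne_zero (hF' : ContinuousOn (Function.uncurry F') (S ×ˢ Ioo c d))
    {x₀ : B} {y₀ : ℝ} (hx₀ : x₀ ∈ S) (hy₀ : y₀ ∈ Ioo c d) (hne : F' x₀ y₀ ≠ 0) :
    ∀ᶠ p in 𝓝[S] x₀ ×ˢ 𝓝 y₀, F' p.1 p.2 ≠ 0 := by
  rw [← isOpen_Ioo.nhdsWithin_eq hy₀, ← nhdsWithin_prod_eq]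
  exact (hF' (x₀, y₀) ⟨hx₀, hy₀⟩).eventually_ne hne

theorem isLocallyInjective_proj (hF' : ContinuousOn (Function.uncurry F') (S ×ˢ Ioo c d))
    (hderiv : ∀ x ∈ S, ∀ y ∈ Ioo c d, HasDerivAt (F x) (F' x y) y)
    (hcrit : ∀ x ∈ S, ∀ y ∈ Ioo c d, F x y = 0 → F' x y ≠ 0) :
    IsLocallyInjective (proj : curveOver F c d S → S) := by
  rw [isLocallyInjective_iff_nhds]
  rintro ⟨⟨x₀, y₀⟩, hx₀, hy₀, h₀⟩
  obtain ⟨V, hV, hinj⟩ := exists_mem_nhds_eventually_injOn (eventually_hasDerivAt hderiv x₀ hy₀)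
    (eventually_deriv_ne_zero hF' hx₀ hy₀ (hcrit x₀ hx₀ y₀ hy₀ h₀))
  obtain ⟨U, hU, hUS⟩ := mem_nhdsWithin_iff_exists_mem_nhds_inter.1 hinj
  refine ⟨Subtype.val ⁻¹' U ×ˢ V,
    continuous_subtype_val.continuousAt.preimage_mem_nhds (prod_mem_nhds hU hV), ?_⟩
  rintro ⟨⟨x₁, y₁⟩, hx₁, hy₁, h₁⟩ hUV₁ ⟨⟨x₂, y₂⟩, hx₂, hy₂, h₂⟩ hUV₂ heq
  obtain rfl : x₁ = x₂ := congrArg Subtype.val heq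
  obtain rfl : y₁ = y₂ := hUS ⟨hUV₁.1, hx₁⟩ hUV₁.2 hUV₂.2 (h₁.trans h₂.symm)
  rfl

theorem isOpenMap_proj (hF : ContinuousOn (Function.uncurry F) (S ×ˢ Ioo c d))
    (hderiv : ∀ x ∈ S, ∀ y ∈ Ioo c d, HasDerivAt (F x) (F' x y) y)
    (hcrit : ∀ x ∈ S, ∀ y ∈ Ioo c d, F x y = 0 → F' x y ≠ 0) :
    IsOpenMap (proj : curveOver F c d S → S) := by
  refine IsOpenMap.of_nhds_le ?_
  rintro ⟨⟨x₀, y₀⟩, hx₀, hy₀, h₀⟩ N hN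
  obtain ⟨M, hM, hMN⟩ := (mem_nhds_subtype _ _ _).1 (mem_map.1 hN)
  obtain ⟨U, hU, V, hV, hUVM⟩ := mem_nhds_prod_iff.1 hM
  have hlim : ∀ᶠ y in 𝓝 y₀, Tendsto (fun x => F x y) (𝓝[S] x₀) (𝓝 (F x₀ y)) := by
    filter_upwards [isOpen_Ioo.mem_nhds hy₀] with y hy
    have hFy : ContinuousOn (fun x => F x y) S :=
      hF.comp (Continuous.prodMk_left y).continuousOn fun x hx => ⟨hx, hy⟩
    exact hFy x₀ hx₀
  have hroot : ∀ᶠ x in 𝓝[S] x₀, ∃ y ∈ V ∩ Ioo c d, F x y = 0 :=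
    eventually_exists_mem_eq_zero (hderiv x₀ hx₀ y₀ hy₀) (hcrit x₀ hx₀ y₀ hy₀ h₀) h₀ hlim
      ((eventually_hasDerivAt hderiv x₀ hy₀).mono fun _ h => h.continuousAt)
      (inter_mem hV (isOpen_Ioo.mem_nhds hy₀))
  have hlift : ∀ᶠ x in 𝓝[S] x₀, ∀ hx : x ∈ S, (⟨x, hx⟩ : S) ∈ N := by
    filter_upwards [hroot, mem_nhdsWithin_of_mem_nhds hU] with x ⟨y, hy, hxy⟩ hxU hx
    exact hMN (a := ⟨(x, y), hx, hy.2, hxy⟩) (hUVM ⟨hxU, hy.1⟩)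
  change ∀ᶠ x : S in 𝓝 ⟨x₀, hx₀⟩, x ∈ N
  rw [nhds_subtype_eq_comap_nhdsWithin]
  exact (hlift.comap _).mono fun x h => h x.2

theorem isCompact (hK : IsCompact K) (hKclosed : IsClosed K)
    (hF : ContinuousOn (Function.uncurry F) (K ×ˢ Icc c d))
    (hseg : ∀ x ∈ K, F x c ≠ 0 ∧ F x d ≠ 0) : IsCompact (curveOver F c d K) := by
  have hset : curveOver F c d K = (K ×ˢ Icc c d) ∩ Function.uncurry F ⁻¹' {0} := by
    ext ⟨x, y⟩
    constructor
    · rintro ⟨hx, hy, h₀⟩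
      exact ⟨⟨hx, Ioo_subset_Icc_self hy⟩, h₀⟩
    · rintro ⟨⟨hx, hy⟩, h₀⟩
      refine ⟨hx, ⟨lt_of_le_of_ne hy.1 ?_, lt_of_le_of_ne hy.2 ?_⟩, h₀⟩
      · rintro rfl
        exact (hseg x hx).1 h₀
      · rintro rfl
        exact (hseg x hx).2 h₀
  rw [hset]
  exact (hK.prod isCompact_Icc).of_isClosed_subset
    (hF.preimage_isClosed_of_isClosed (hKclosed.prod isClosed_Icc) isClosed_singleton)
    inter_subset_left

end curveOver

namespace IsRegularSegregating

open curveOver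

variable {B : Type*} [TopologicalSpace B] [T2Space B] {F F' : B → ℝ → ℝ} {c d : ℝ} {K S : Set B}

theorem isCoveringMap_proj (h : IsRegularSegregating F F' c d K) (hK : IsCompact K) :
    IsCoveringMap (proj : curveOver F c d K → K) := by
  have := isCompact_iff_compactSpace.1 (curveOver.isCompact hK hK.isClosed
    h.continuousOn h.ne_zero_edges)
  exact isLocalHomeomorph_iff_isCoveringMap.1 <|
    isLocalHomeomorph_of_isOpenMap_of_isLocallyInjective continuous_proj
      (isOpenMap_proj (h.continuousOn.mono (prod_mono_right Ioo_subset_Icc_self)) h.hasDerivAt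
        h.deriv_ne_zero)
      (isLocallyInjective_proj h.continuousOn_deriv h.hasDerivAt h.deriv_ne_zero)

theorem finite_roots (h : IsRegularSegregating F F' c d K) (hK : IsCompact K) {x : B} (hx : x ∈ K) :
    {y ∈ Ioo c d | F x y = 0}.Finite := by
  have := isCompact_iff_compactSpace.1 (curveOver.isCompact hK hK.isClosed
    h.continuousOn h.ne_zero_edges)
  have := (finite_fiber_of_isLocallyInjective continuous_proj
    (isLocallyInjective_proj h.continuousOn_deriv h.hasDerivAt h.deriv_ne_zero) ⟨x, hx⟩).to_subtype
  exact Finite.of_equiv _ (fiberEquiv ⟨x, hx⟩)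

theorem exists_branch [SimplyConnectedSpace K] [LocallyPathConnectedSpace K]
    (h : IsRegularSegregating F F' c d K) (hK : IsCompact K)
    {x₀ : B} {y₀ : ℝ} (hx₀ : x₀ ∈ K) (hy₀ : y₀ ∈ Ioo c d) (h₀ : F x₀ y₀ = 0) :
    ∃ φ : K → ℝ, Continuous φ ∧ (∀ x, φ x ∈ Ioo c d ∧ F x (φ x) = 0) ∧ φ ⟨x₀, hx₀⟩ = y₀ := by
  obtain ⟨σ, hσ, hpσ, hσ₀⟩ := exists_section_of_isCoveringMap
    (h.isCoveringMap_proj hK) ⟨(x₀, y₀), hx₀, hy₀, h₀⟩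
  have hfst (x : K) : (σ x).1.1 = x := congrArg Subtype.val (hpσ x)
  refine ⟨fun x => (σ x).1.2, by fun_prop, fun x => ⟨(σ x).2.2.1, ?_⟩,
    congrArg (fun e => e.1.2) hσ₀⟩
  simpa only [hfst] using (σ x).2.2.2

theorem ncard_roots_eq_card_connectedComponents [SimplyConnectedSpace K]
    [LocallyPathConnectedSpace K] (h : IsRegularSegregating F F' c d K) (hK : IsCompact K)
    (hSK : S ⊆ K) (hS : IsPreconnected S) {x : B} (hx : x ∈ S) :
    {y ∈ Ioo c d | F x y = 0}.ncard = Nat.card (ConnectedComponents (curveOver F c d S)) := by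
  have := isPreconnected_iff_preconnectedSpace.1 hS
  have hsec (e : curveOver F c d S) :
      ∃ σ : S → curveOver F c d S, Continuous σ ∧ (∀ x, proj (σ x) = x) ∧ σ (proj e) = e := by
    obtain ⟨⟨x₀, y₀⟩, hx₀, hy₀, h₀⟩ := e
    obtain ⟨φ, hφ, hφF, hφ₀⟩ := h.exists_branch hK (hSK hx₀) hy₀ h₀
    refine ⟨fun x => ⟨(x, φ (inclusion hSK x)), x.2, hφF (inclusion hSK x)⟩, ?_, fun x => rfl,
      Subtype.ext (Prod.ext rfl hφ₀)⟩
    have := continuous_inclusion hSK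
    fun_prop
  have hinj : IsLocallyInjective (proj : curveOver F c d S → S) :=
    isLocallyInjective_proj (h.continuousOn_deriv.mono (prod_mono_left hSK))
      (fun x hx => h.hasDerivAt x (hSK hx)) fun x hx => h.deriv_ne_zero x (hSK hx)
  have hbij := bijective_fiber_connectedComponents continuous_proj
    (T2Space.isSeparatedMap _) hinj hsec ⟨x, hx⟩
  rw [← Nat.card_coe_set_eq, ← Nat.card_congr (fiberEquiv (⟨x, hx⟩ : S))]
  exact Nat.card_eq_of_bijective _ hbij

end IsRegularSegregating

theorem branch_count_in_segregating_box_general {B : Type*} [TopologicalSpace B] [T2Space B]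
    {F F' : B → ℝ → ℝ} {c d : ℝ} {K S : Set B} [SimplyConnectedSpace K]
    [LocallyPathConnectedSpace K] (h : IsRegularSegregating F F' c d K) (hK : IsCompact K)
    (hSK : S ⊆ K) (hS : IsConnected S) {x : B} (hx : x ∈ K) :
    {y ∈ Ioo c d | F x y = 0}.Finite ∧
      {y ∈ Ioo c d | F x y = 0}.ncard = Nat.card (ConnectedComponents (curveOver F c d S)) := by
  refine ⟨h.finite_roots hK hx, ?_⟩
  have hcount {T : Set B} (hTK : T ⊆ K) (hT : IsPreconnected T) {t : B} (ht : t ∈ T) :=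
    h.ncard_roots_eq_card_connectedComponents hK hTK hT ht
  have hKconn : IsPreconnected K := isPreconnected_iff_preconnectedSpace.2 inferInstance
  obtain ⟨s, hs⟩ := hS.nonempty
  calc {y ∈ Ioo c d | F x y = 0}.ncard
    _ = Nat.card (ConnectedComponents (curveOver F c d K)) := hcount Subset.rfl hKconn hx
    _ = {y ∈ Ioo c d | F s y = 0}.ncard := (hcount Subset.rfl hKconn (hSK hs)).symm
    _ = Nat.card (ConnectedComponents (curveOver F c d S)) := hcount hSK hS.isPreconnected hs

/-- Inside a segregating box `[a,b] × [c,d]` with no x-critical point of the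
curve `g = 0` in `[a,b] × (c,d)`, the number of roots of `g(a,·)` in `(c,d)`, the number of
roots of `g(b,·)` in `(c,d)`, and the number of connected components of the part of the curve
in the open box all coincide, and all these roots are simple. -/
theorem branch_count_in_segregating_box
    (g : MvPolynomial (Fin 2) ℝ) (a b c d : ℝ) (hab : a < b) (hcd : c < d)
    (hfiber : ∀ x₀ ∈ Set.Icc a b, ∃ y : ℝ, eval ![x₀, y] g ≠ 0)
    (hseg : ∀ x ∈ Set.Icc a b, eval ![x, c] g ≠ 0 ∧ eval ![x, d] g ≠ 0)
    (hcrit : ∀ x ∈ Set.Icc a b, ∀ y ∈ Set.Ioo c d,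
      ¬(eval ![x, y] g = 0 ∧ eval ![x, y] (pderiv 1 g) = 0)) :
    ({y ∈ Set.Ioo c d | eval ![a, y] g = 0}.ncard
        = {y ∈ Set.Ioo c d | eval ![b, y] g = 0}.ncard ∧
      {y ∈ Set.Ioo c d | eval ![a, y] g = 0}.ncard
        = Nat.card (ConnectedComponents
            {p : ℝ × ℝ // p.1 ∈ Set.Ioo a b ∧ p.2 ∈ Set.Ioo c d ∧ eval ![p.1, p.2] g = 0})) ∧
      (∀ y ∈ Set.Ioo c d, eval ![a, y] g = 0 → eval ![a, y] (pderiv 1 g) ≠ 0) ∧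
      (∀ y ∈ Set.Ioo c d, eval ![b, y] g = 0 → eval ![b, y] (pderiv 1 g) ≠ 0) := by
  have hcont (p : MvPolynomial (Fin 2) ℝ) : Continuous fun q : ℝ × ℝ => eval ![q.1, q.2] p :=
    (continuous_eval p).comp (by fun_prop)
  have hsimple : ∀ x ∈ Icc a b, ∀ y ∈ Ioo c d,
      eval ![x, y] g = 0 → eval ![x, y] (pderiv 1 g) ≠ 0 :=
    fun x hx y hy h₀ h₁ => hcrit x hx y hy ⟨h₀, h₁⟩
  have := simplyConnectedSpace_of_convex (convex_Icc a b) (nonempty_Icc.2 hab.le)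
  have := (convex_Icc a b).locallyPathConnectedSpace
  have hbox : IsRegularSegregating (fun x y => eval ![x, y] g)
      (fun x y => eval ![x, y] (pderiv 1 g)) c d (Icc a b) :=
    ⟨(hcont g).continuousOn, (hcont (pderiv 1 g)).continuousOn,
      fun x _ y _ => hasDerivAt_eval_pderiv_one g x y, hseg, hsimple⟩
  have hcount {x : ℝ} (hx : x ∈ Icc a b) := (branch_count_in_segregating_box_general hbox
    isCompact_Icc Ioo_subset_Icc_self (isConnected_Ioo hab) hx).2
  have ha := left_mem_Icc.2 hab.le
  have hb := right_mem_Icc.2 hab.le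
  exact ⟨⟨(hcount ha).trans (hcount hb).symm, hcount ha⟩, hsimple a ha, hsimple b hb⟩
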